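/- Let n ≥ 2, 1 ≤ s ≤ n, a₁,…,a_{s−1} nonzero reals, b ∈ ℝ, and let L ⊆ ℝⁿ be the hyperplane parameterized by (x₁,…,x_{n−1}) ↦ (x₁,…,x_{n−1}, a₁x₁+⋯+a_{s−1}x_{s−1}+b). For v > n let c_s = (v−n)/(sv+n), and say that condition P(v) holds if: for every d > c_s there exists T > 0 such that for all t = (t₁,…,t_n), tᵢ ≥ 0, with ∑ᵢtᵢ ≥ T and every w = (p₀,p₁,…,p_n) ∈ ℤ^{n+1}_s one has max( max_{1≤i≤n} e^{−tᵢ}|pᵢ|, e^{∑ᵢtᵢ}·max(|p₀+b·p_n|, max_{1≤i≤s−1}|pᵢ+aᵢ·p_n|, max_{s≤i≤n−1}|pᵢ|) ) ≥ e^{−d·∑ᵢtᵢ}. Then ω×(L) = max{ n, sup{v > n : P(v) does not hold} } (with sup ∅ = n in the extended reals). -/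

import Mathlib

open Filter MeasureTheory Metric Set BigOperators

/-- Π×(q) = ∏_{i : qᵢ ≠ 0} |qᵢ| (empty product = 1). -/
noncomputable def prodTimes {n : ℕ} (q : Fin n → ℤ) : ℝ :=
  ∏ i, if q i = 0 then 1 else |(q i : ℝ)|

/-- Multiplicative Diophantine exponent ω×(y): the sup (in the extended reals) of all
v ∈ ℝ such that there are infinitely many q ∈ ℤⁿ with |q·y + p| < Π×(q)^{-v/n}
for some p ∈ ℤ. -/
noncomputable def omegaT {n : ℕ} (y : Fin n → ℝ) : EReal :=
  sSup {w : EReal | ∃ v : ℝ, w = (v : EReal) ∧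
    {q : Fin n → ℤ | ∃ p : ℤ, |(∑ i, (q i : ℝ) * y i) + (p : ℝ)| <
      (prodTimes q) ^ (-(v / (n : ℝ)))}.Infinite}

/-- ω×(μ) for a measure: sup{v : μ{y : ω×(y) > v} > 0}. -/
noncomputable def omegaTMeas {n : ℕ} (μ : Measure (Fin n → ℝ)) : EReal :=
  sSup {w : EReal | ∃ v : ℝ, w = (v : EReal) ∧ 0 < μ {y | (v : EReal) < omegaT y}}

/-- ‖R C(w)‖ for the hyperplane data (a, b): here w = (p₀, p) with p = (p₁, …, p_n),
n = m + 1, s = r + 1, and p_n = p (Fin.last m); this is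
max(|p₀ + b·p_n|, max_{1≤i≤s-1} |pᵢ + aᵢ·p_n|, max_{s≤i≤n-1} |pᵢ|). -/
noncomputable def RCnorm (m r : ℕ) (hrm : r ≤ m) (a : Fin r → ℝ) (b : ℝ)
    (p0 : ℤ) (p : Fin (m + 1) → ℤ) : ℝ :=
  max (|(p0 : ℝ) + b * (p (Fin.last m) : ℝ)|)
    (max
      (Finset.univ.fold max 0 (fun j : Fin r =>
        |(p (Fin.castLE (le_trans hrm (Nat.le_succ m)) j) : ℝ) + a j * (p (Fin.last m) : ℝ)|))
      ((Finset.univ.filter (fun j : Fin (m + 1) => r ≤ (j : ℕ) ∧ (j : ℕ) < m)).fold max 0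
        (fun j => |(p j : ℝ)|)))

/-- Condition (2.6.2) / P(v) for the hyperplane data (a, b), with n = m + 1, s = r + 1:
for every d > c_s there is T > 0 such that for every t with tᵢ ≥ 0 and ∑ tᵢ ≥ T and
every w = (p₀, p) ∈ ℤ^{n+1}_s one has
max(maxᵢ e^{-tᵢ}|pᵢ|, e^{∑ t}·‖R C(w)‖) ≥ e^{-d ∑ t}. -/
def PCond (m r : ℕ) (hrm : r ≤ m) (a : Fin r → ℝ) (b : ℝ) (v : ℝ) : Prop :=
  ∀ d : ℝ, (v - (m + 1 : ℝ)) / ((r + 1 : ℝ) * v + (m + 1 : ℝ)) < d →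
    ∃ T > (0:ℝ), ∀ t : Fin (m + 1) → ℝ, (∀ i, 0 ≤ t i) → T ≤ ∑ i, t i →
      ∀ (p0 : ℤ) (p : Fin (m + 1) → ℤ),
        (Finset.univ.filter fun i => p i ≠ 0).card = r + 1 →
        Real.exp (-d * ∑ i, t i) ≤
          max (Finset.univ.fold max 0 (fun i => Real.exp (-(t i)) * |(p i : ℝ)|))
            (Real.exp (∑ i, t i) * RCnorm m r hrm a b p0 p)


theorem one_le_factor (k : ℤ) : (1 : ℝ) ≤ if k = 0 then 1 else |(k : ℝ)| := by
  split_ifs with h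
  · exact le_rfl
  · exact_mod_cast Int.one_le_abs h

theorem one_le_prodTimes {n : ℕ} (q : Fin n → ℤ) : 1 ≤ prodTimes q :=
  Finset.one_le_prod fun i _ => one_le_factor (q i)

theorem prodTimes_eq_prod_filter {n : ℕ} (q : Fin n → ℤ) :
    prodTimes q = ∏ i with q i ≠ 0, |(q i : ℝ)| := by
  rw [prodTimes, Finset.prod_filter]
  exact Finset.prod_congr rfl fun i _ => by split_ifs <;> simp_all

/-- Arbitrarily small values of `q · y + p` subject to the inequality defining `omegaT` force
infinitely many solutions `q`. -/
theorem infinite_solutions {n : ℕ} (y : Fin n → ℝ) (e : ℝ)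
    (h : ∀ δ > 0, ∃ q : Fin n → ℤ, ∃ p : ℤ, q ≠ 0 ∧ |∑ i, (q i : ℝ) * y i + (p : ℝ)| < δ ∧
      |∑ i, (q i : ℝ) * y i + (p : ℝ)| < prodTimes q ^ e) :
    {q : Fin n → ℤ | ∃ p : ℤ, |∑ i, (q i : ℝ) * y i + (p : ℝ)| < prodTimes q ^ e}.Infinite := by
  by_cases h0 : ∃ q : Fin n → ℤ, ∃ p : ℤ, q ≠ 0 ∧ ∑ i, (q i : ℝ) * y i + (p : ℝ) = 0
  · obtain ⟨q, p, hq, hqp⟩ := h0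
    refine Set.infinite_of_injective_forall_mem (f := fun k : ℤ => k • q)
      (smul_left_injective ℤ hq) fun k => ⟨k * p, ?_⟩
    have : ∑ i, (((k • q) i : ℤ) : ℝ) * y i + ((k * p : ℤ) : ℝ) = 0 := by
      have := congrArg (fun z => (k : ℝ) * z) hqp
      simp only [mul_add, Finset.mul_sum, mul_zero] at this
      simpa [mul_assoc] using this
    rw [this, abs_zero]
    exact Real.rpow_pos_of_pos (one_pos.trans_le (one_le_prodTimes _)) _
  · push Not at h0
    intro hfin
    let dist : (Fin n → ℤ) → ℝ := fun q =>
      |∑ i, (q i : ℝ) * y i - round (∑ i, (q i : ℝ) * y i)|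
    obtain ⟨δ, hδ, hle⟩ : ∃ δ > 0, ∀ q ∈ hfin.toFinset, q ≠ 0 → δ ≤ dist q := by
      have key : ∀ q ∈ hfin.toFinset, ∀ᶠ δ in nhdsWithin (0 : ℝ) (Ioi 0), q ≠ 0 → δ ≤ dist q := by
        intro q _
        by_cases hq : q = 0
        · simp [hq]
        · have : 0 < dist q := abs_pos.2 fun h => h0 q (-round (∑ i, (q i : ℝ) * y i)) hq (by
            push_cast; linarith)
          filter_upwards [Ioo_mem_nhdsGT this] with δ hδ _ using hδ.2.le
      obtain ⟨δ, h1, h2⟩ := (((Filter.eventually_all_finset _).2 key).and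
        self_mem_nhdsWithin).exists
      exact ⟨δ, h2, h1⟩
    obtain ⟨q, p, hq, h1, h2⟩ := h δ hδ
    have h3 := hle q (by simpa using ⟨p, h2⟩) hq
    have h4 := round_le (∑ i, (q i : ℝ) * y i) (-p)
    push_cast at h4
    rw [sub_neg_eq_add] at h4
    exact absurd h1 (not_lt.2 (h3.trans h4))

theorem natCast_le_omegaT {m : ℕ} (y : Fin (m + 1) → ℝ) : ((m + 1 : ℕ) : EReal) ≤ omegaT y := by
  refine le_sSup ⟨((m + 1 : ℕ) : ℝ), by simp, ?_⟩
  rw [div_self (by positivity)]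
  refine infinite_solutions y _ fun δ hδ => ?_
  obtain ⟨N, hN⟩ := exists_nat_one_div_lt hδ
  obtain ⟨j, k, hk, hkN, hjk⟩ := Real.exists_int_int_abs_mul_sub_le (y 0) (Nat.succ_pos N)
  have hsum : ∑ i, ((Pi.single (M := fun _ => ℤ) (0 : Fin (m + 1)) k i : ℤ) : ℝ) * y i +
      ((-j : ℤ) : ℝ) = k * y 0 - j := by
    rw [Finset.sum_eq_single 0] <;> simp +contextual [sub_eq_add_neg]
  have hprod : prodTimes (Pi.single (M := fun _ => ℤ) (0 : Fin (m + 1)) k) = k := by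
    rw [prodTimes, Finset.prod_eq_single 0]
    · simp [hk.ne', hk.le]
    · simp +contextual
    · simp
  have hk' : (0 : ℝ) < k := by exact_mod_cast hk
  have hkN' : (k : ℝ) ≤ N + 1 := by exact_mod_cast hkN
  push_cast at hjk
  refine ⟨Pi.single 0 k, -j, by simpa using hk.ne', ?_, ?_⟩
  · rw [hsum]
    refine hjk.trans_lt (lt_of_le_of_lt ?_ hN)
    gcongr; linarith
  · rw [hsum, hprod, Real.rpow_neg_one, ← one_div]
    refine hjk.trans_lt ?_
    gcongr; linarith

/-- The coefficients of `x ↦ q · y(x) + p` at `x₁, …, x_m`, where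
`y(x) = (x, α · x + b)`. -/
noncomputable def linCoeff {m : ℕ} (α : Fin m → ℝ) (q : Fin (m + 1) → ℤ) : Fin m → ℝ :=
  fun j => q j.castSucc + α j * q (Fin.last m)

/-- The maximum norm of the coefficients of `x ↦ q · y(x) + p`. -/
noncomputable def coeffHeight {m : ℕ} (α : Fin m → ℝ) (b : ℝ) (p : ℤ) (q : Fin (m + 1) → ℤ) : ℝ :=
  max |(p : ℝ) + b * q (Fin.last m)| ‖linCoeff α q‖

/-- The slope vector `a` extended by zeros. -/
noncomputable def extendSlope {m r : ℕ} (a : Fin r → ℝ) : Fin m → ℝ :=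
  fun j => if h : (j : ℕ) < r then a ⟨j, h⟩ else 0

theorem RCnorm_eq_coeffHeight {m r : ℕ} (hrm : r ≤ m) (a : Fin r → ℝ) (b : ℝ) (p : ℤ)
    (q : Fin (m + 1) → ℤ) : RCnorm m r hrm a b p q = coeffHeight (extendSlope a) b p q := by
  rw [RCnorm, coeffHeight]
  congr 1
  apply le_antisymm
  · refine max_le ?_ ?_
    · refine (Finset.fold_max_le _).2 ⟨norm_nonneg _, fun j _ => ?_⟩
      have := norm_le_pi_norm (linCoeff (extendSlope a) q) (Fin.castLE hrm j)
      simpa [linCoeff, extendSlope] using this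
    · refine (Finset.fold_max_le _).2 ⟨norm_nonneg _, fun j hj => ?_⟩
      simp only [Finset.mem_filter, Finset.mem_univ, true_and] at hj
      have := norm_le_pi_norm (linCoeff (extendSlope a) q) ⟨j, hj.2⟩
      simpa [linCoeff, extendSlope, hj.1.not_gt] using this
  · refine (pi_norm_le_iff_of_nonneg ?_).2 fun j => ?_
    · exact le_max_of_le_left ((Finset.le_fold_max _).2 (Or.inl le_rfl))
    · by_cases hj : (j : ℕ) < r
      · refine le_max_of_le_left ((Finset.le_fold_max _).2 (Or.inr ⟨⟨j, hj⟩, by simp, ?_⟩))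
        simp [linCoeff, extendSlope, hj, Fin.castLE, Fin.castSucc, Fin.castAdd]
      · refine le_max_of_le_right ((Finset.le_fold_max _).2 (Or.inr ⟨j.castSucc, ?_, ?_⟩))
        · simpa using hj
        · simp [linCoeff, extendSlope, hj]

theorem card_extendSlope_ne_zero {m r : ℕ} (hrm : r ≤ m) {a : Fin r → ℝ} (ha : ∀ i, a i ≠ 0) :
    (Finset.univ.filter fun j : Fin m => extendSlope a j ≠ 0).card = r := by
  have : (Finset.univ.filter fun j : Fin m => extendSlope a j ≠ 0)
      = Finset.univ.map (Fin.castLEEmb hrm) := by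
    ext j
    simp only [extendSlope, Finset.mem_univ, true_and, Finset.mem_map,
      Fin.castLEEmb_apply]
    constructor
    · intro h
      by_cases hj : (j : ℕ) < r
      · exact ⟨⟨j, hj⟩, rfl⟩
      · simp [hj] at h
    · rintro ⟨i, rfl⟩
      simp [ha]
  rw [this, Finset.card_map, Finset.card_univ, Fintype.card_fin]

theorem sum_mul_extendSlope {m r : ℕ} (hrm : r ≤ m) (a : Fin r → ℝ) (x : Fin m → ℝ) :
    ∑ i, a i * x (Fin.castLE hrm i) = ∑ j, extendSlope a j * x j := by
  obtain ⟨k, rfl⟩ := Nat.exists_eq_add_of_le hrm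
  rw [Fin.sum_univ_add]
  simp [extendSlope, Fin.castLE, Fin.castAdd]

/-- The parametrization of the hyperplane `y_{m+1} = α · x + b`. -/
def hyperplaneParam {m : ℕ} (α : Fin m → ℝ) (b : ℝ) (x : Fin m → ℝ) : Fin (m + 1) → ℝ :=
  Fin.snoc x (∑ j, α j * x j + b)

theorem sum_mul_hyperplaneParam {m : ℕ} (α : Fin m → ℝ) (b : ℝ) (x : Fin m → ℝ)
    (q : Fin (m + 1) → ℤ) (p : ℤ) :
    ∑ i, (q i : ℝ) * hyperplaneParam α b x i + p =
      (p + b * q (Fin.last m)) + ∑ j, linCoeff α q j * x j := by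
  rw [Fin.sum_univ_castSucc]
  simp only [hyperplaneParam, Fin.snoc_castSucc, Fin.snoc_last, linCoeff, add_mul, mul_add,
    Finset.sum_add_distrib, Finset.mul_sum]
  rw [Finset.sum_congr rfl fun j _ => (by ring :
    α j * q (Fin.last m) * x j = q (Fin.last m) * (α j * x j))]
  ring

theorem abs_affine_le {m : ℕ} (c₀ : ℝ) (c x : Fin m → ℝ) :
    |c₀ + ∑ j, c j * x j| ≤ |c₀| + ‖c‖ * ∑ j, |x j| := by
  refine (abs_add_le _ _).trans (add_le_add le_rfl ((Finset.abs_sum_le_sum_abs _ _).trans ?_))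
  rw [Finset.mul_sum]
  gcongr with j
  rw [abs_mul]
  gcongr
  exact norm_le_pi_norm c j
/-- A family of integers `g w` which are separated and large in terms of heights `h w` has a
convergent weighted sum. -/
theorem summable_of_separated {W : Type*} (g : W → ℤ) (h : W → ℝ) {β γ : ℝ}
    (hβ : 0 < β) (hβγ : β < γ) (hγ : 1 < γ) (h1 : ∀ w, 1 ≤ h w) (hg : ∀ w, h w ≤ |(g w : ℝ)|)
    (hsep : ∀ w w', w ≠ w' → min (h w) (h w') ≤ |(g w : ℝ) - g w'|) :
    Summable fun w => h w ^ β * |(g w : ℝ)| ^ (-γ) := by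
  choose j hj using fun w => exists_nat_pow_near (h1 w) (one_lt_two (α := ℝ))
  let k : W → ℤ := fun w => ⌊(g w : ℝ) / 2 ^ j w⌋
  have hinj : Function.Injective fun w => (j w, k w) := by
    intro w w' hww
    by_contra hne
    obtain ⟨e1, e2⟩ := Prod.mk.inj hww
    have hsep' := (le_min (hj w).1 (e1 ▸ (hj w').1)).trans (hsep w w' hne)
    have hpos : (0 : ℝ) < 2 ^ j w := by positivity
    have e3 : ⌊(g w : ℝ) / 2 ^ j w⌋ = ⌊(g w' : ℝ) / 2 ^ j w⌋ := by
      simpa only [k, e1] using e2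
    have := Int.abs_sub_lt_one_of_floor_eq_floor e3
    rw [← sub_div, abs_div, abs_of_pos hpos, div_lt_one hpos] at this
    linarith
  have hsum : Summable fun z : ℕ × ℤ =>
      (2 ^ (β + γ)) * (((2 : ℝ) ^ (β - γ)) ^ z.1 * max 1 |(z.2 : ℝ)| ^ (-γ)) := by
    refine Summable.mul_left _ (Summable.mul_of_nonneg (f := fun i : ℕ => ((2 : ℝ) ^ (β - γ)) ^ i)
      (g := fun i : ℤ => max 1 |(i : ℝ)| ^ (-γ)) ?_ ?_ ?_ ?_)
    · exact summable_geometric_of_lt_one (by positivity)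
        (Real.rpow_lt_one_of_one_lt_of_neg one_lt_two (by linarith))
    · refine (Real.summable_abs_int_rpow hγ).congr_cofinite ?_
      filter_upwards [(Set.finite_singleton (0 : ℤ)).compl_mem_cofinite] with i hi
      have : (1 : ℝ) ≤ |(i : ℝ)| := by exact_mod_cast Int.one_le_abs hi
      rw [max_eq_right this]
    · intro i; positivity
    · intro i; positivity
  refine Summable.of_nonneg_of_le (fun w => by positivity [h1 w]) (fun w => ?_)
    (hsum.comp_injective hinj)
  have hpos : (0 : ℝ) < 2 ^ j w := by positivity
  have hgj := (hj w).1.trans (hg w)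
  have hk : max 1 |(k w : ℝ)| * 2 ^ j w / 2 ≤ |(g w : ℝ)| := by
    have f1 := Int.floor_le ((g w : ℝ) / 2 ^ j w)
    have f2 := Int.lt_floor_add_one ((g w : ℝ) / 2 ^ j w)
    have f3 : 1 ≤ |(g w : ℝ) / 2 ^ j w| := by
      rw [abs_div, abs_of_pos hpos]; exact (one_le_div hpos).2 hgj
    have f4 : max 1 |(k w : ℝ)| ≤ 2 * |(g w : ℝ) / 2 ^ j w| := by
      refine max_le (by linarith) ?_
      have f5 := abs_sub_abs_le_abs_sub (k w : ℝ) ((g w : ℝ) / 2 ^ j w)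
      have f6 : |(k w : ℝ) - (g w : ℝ) / 2 ^ j w| ≤ 1 := by
        rw [abs_le]; constructor <;> simp only [k] <;> linarith
      linarith
    rw [abs_div, abs_of_pos hpos, ← mul_div_assoc, le_div_iff₀ hpos] at f4
    linarith
  have e1 : h w ^ β ≤ (2 ^ (j w + 1)) ^ β :=
    Real.rpow_le_rpow (by linarith [h1 w]) (hj w).2.le hβ.le
  have e2 : |(g w : ℝ)| ^ (-γ) ≤ (max 1 |(k w : ℝ)| * 2 ^ j w / 2) ^ (-γ) :=
    Real.rpow_le_rpow_of_nonpos (by positivity) hk (by linarith)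
  refine (mul_le_mul e1 e2 (by positivity) (by positivity)).trans_eq ?_
  simp only [Function.comp]
  rw [Real.div_rpow (by positivity) (by positivity), Real.mul_rpow (by positivity) (by positivity),
    ← Real.rpow_natCast, ← Real.rpow_natCast, ← Real.rpow_natCast, ← Real.rpow_mul (by positivity),
    ← Real.rpow_mul (by positivity), ← Real.rpow_mul (by positivity)]
  have e3 : (2 : ℝ) ^ (((j w + 1 : ℕ) : ℝ) * β) =
      2 ^ β * 2 ^ ((j w : ℝ) * β) := by
    rw [← Real.rpow_add two_pos]; push_cast; ring_nf
  have e4 : (2 : ℝ) ^ (β + γ) = 2 ^ β / 2 ^ (-γ) := by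
    rw [← Real.rpow_sub two_pos]; ring_nf
  have e5 : (2 : ℝ) ^ ((β - γ) * (j w : ℝ)) = 2 ^ ((j w : ℝ) * β) * 2 ^ ((j w : ℝ) * -γ) := by
    rw [← Real.rpow_add two_pos]; ring_nf
  rw [e3, e4, e5]
  ring

theorem summable_prodTimes_rpow (n : ℕ) {γ : ℝ} (hγ : 1 < γ) :
    Summable fun q : Fin n → ℤ => prodTimes q ^ (-γ) := by
  have h1 : Summable fun k : ℤ => (if k = 0 then (1 : ℝ) else |(k : ℝ)|) ^ (-γ) := by
    refine (Real.summable_abs_int_rpow hγ).congr_cofinite ?_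
    filter_upwards [(Set.finite_singleton (0 : ℤ)).compl_mem_cofinite] with i hi
    rw [if_neg (by simpa using hi)]
  induction n with
  | zero => exact Summable.of_finite
  | succ n ih =>
    rw [← (Fin.consEquiv fun _ => ℤ).summable_iff]
    refine (Summable.mul_of_nonneg h1 ih (fun k => ?_) fun q => ?_).congr fun z => ?_
    · exact Real.rpow_nonneg (zero_le_one.trans (one_le_factor k)) _
    · exact Real.rpow_nonneg (zero_le_one.trans (one_le_prodTimes q)) _
    · rw [← Real.mul_rpow (zero_le_one.trans (one_le_factor _))
        (zero_le_one.trans (one_le_prodTimes _))]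
      simp [prodTimes, Fin.prod_univ_succ, Fin.consEquiv]

theorem volume_abs_mul_add_lt_le {c : ℝ} (hc : c ≠ 0) (e ε : ℝ) :
    volume {t : ℝ | |c * t + e| < ε} ≤ ENNReal.ofReal (2 * ε / |c|) := by
  have : {t : ℝ | |c * t + e| < ε} = Metric.ball (-e / c) (ε / |c|) := by
    ext t
    rw [Metric.mem_ball, Real.dist_eq, lt_div_iff₀ (abs_pos.2 hc), ← abs_mul]
    simp only [Set.mem_ofPred_eq]
    congr! 2
    field_simp
    ring
  rw [this, Real.volume_ball, mul_div_assoc]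

theorem volume_norm_le (k : ℕ) {R : ℝ} (hR : 0 ≤ R) :
    volume {y : Fin k → ℝ | ‖y‖ ≤ R} = ENNReal.ofReal ((2 * R) ^ k) := by
  have : {y : Fin k → ℝ | ‖y‖ ≤ R} = Metric.closedBall 0 R := by ext; simp
  rw [this, Real.volume_pi_closedBall _ hR, Fintype.card_fin]

theorem volume_slab_le_of_ne_zero {k : ℕ} {R : ℝ} (hR : 0 ≤ R) (c₀ : ℝ) (c : Fin (k + 1) → ℝ)
    (i : Fin (k + 1)) (hi : c i ≠ 0) (ε : ℝ) :
    volume {x : Fin (k + 1) → ℝ | ‖x‖ ≤ R ∧ |c₀ + ∑ j, c j * x j| < ε} ≤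
      ENNReal.ofReal (2 * ε / |c i|) * ENNReal.ofReal ((2 * R) ^ k) := by
  let S : Set (ℝ × (Fin k → ℝ)) :=
    {z | ‖z.2‖ ≤ R ∧ |c i * z.1 + (c₀ + ∑ j, c (i.succAbove j) * z.2 j)| < ε}
  have hS : MeasurableSet S := by
    have h1 : MeasurableSet {z : ℝ × (Fin k → ℝ) | ‖z.2‖ ≤ R} :=
      measurableSet_le (by fun_prop) (by fun_prop)
    have h2 : MeasurableSet {z : ℝ × (Fin k → ℝ) |
        |c i * z.1 + (c₀ + ∑ j, c (i.succAbove j) * z.2 j)| < ε} :=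
      measurableSet_lt (by fun_prop) (by fun_prop)
    exact h1.inter h2
  have hmp := volume_preserving_piFinSuccAbove (fun _ : Fin (k + 1) => ℝ) i
  have hsub : {x : Fin (k + 1) → ℝ | ‖x‖ ≤ R ∧ |c₀ + ∑ j, c j * x j| < ε} ⊆
      MeasurableEquiv.piFinSuccAbove (fun _ => ℝ) i ⁻¹' S := by
    rintro x ⟨h1, h2⟩
    refine ⟨(pi_norm_le_iff_of_nonneg hR).2 fun j => (norm_le_pi_norm x _).trans h1, ?_⟩
    rw [Fin.sum_univ_succAbove _ i, add_left_comm] at h2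
    exact h2
  refine (measure_mono hsub).trans ?_
  rw [hmp.measure_preimage hS.nullMeasurableSet, Measure.volume_eq_prod,
    Measure.prod_apply_symm hS, ← volume_norm_le k hR, ← setLIntegral_const,
    ← lintegral_indicator (measurableSet_le (by fun_prop) (by fun_prop))]
  refine lintegral_mono fun y => ?_
  by_cases hy : ‖y‖ ≤ R
  · rw [Set.indicator_of_mem (by exact hy)]
    refine le_trans (measure_mono ?_)
      (volume_abs_mul_add_lt_le hi (c₀ + ∑ j, c (i.succAbove j) * y j) ε)
    exact fun t ht => And.right ht
  · rw [Set.indicator_of_notMem (by exact hy)]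
    refine le_of_eq ?_
    convert measure_empty (μ := (volume : Measure ℝ))
    exact Set.eq_empty_of_forall_notMem fun t ht => hy (And.left ht)

theorem sum_abs_le_of_norm_le {m : ℕ} {R : ℝ} {x : Fin m → ℝ} (hx : ‖x‖ ≤ R) :
    ∑ j, |x j| ≤ m * R := by
  refine (Finset.sum_le_card_nsmul _ _ R fun j _ => (norm_le_pi_norm x j).trans hx).trans_eq ?_
  simp

/-- Within a bounded box, an affine form with largest coefficient at least `ρ` is smaller than `ε`
on a set of volume `O(ε / ρ)`. -/
theorem exists_volume_slab_le (m : ℕ) {R : ℝ} (hR : 1 ≤ R) : ∃ C > 0, ∀ (c₀ : ℝ) (c : Fin m → ℝ)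
    (ε ρ : ℝ), 0 < ε → 0 < ρ → ρ ≤ max |c₀| ‖c‖ →
    volume {x : Fin m → ℝ | ‖x‖ ≤ R ∧ |c₀ + ∑ j, c j * x j| < ε} ≤
      ENNReal.ofReal (C * ε / ρ) := by
  have hmR : 0 ≤ m * R := by positivity
  obtain ⟨K, hK⟩ : ∃ K, K = 2 * (m * R + 1) := ⟨_, rfl⟩
  have hK1 : 2 ≤ K := by linarith
  refine ⟨2 * K * (2 * R) ^ m, by positivity, fun c₀ c ε ρ hε hρ hle => ?_⟩
  by_cases hc : K * ‖c‖ ≤ |c₀|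
  · have hρc : ρ ≤ |c₀| := by
      rcases le_max_iff.1 hle with h | h
      · exact h
      · nlinarith [norm_nonneg c]
    by_cases hε' : |c₀| / 2 < ε
    · refine (measure_mono (t := {x | ‖x‖ ≤ R}) fun x hx => And.left hx).trans ?_
      rw [volume_norm_le m (by linarith)]
      refine ENNReal.ofReal_le_ofReal ?_
      rw [le_div_iff₀ hρ]
      have : ρ ≤ 2 * K * ε := by nlinarith
      calc (2 * R) ^ m * ρ ≤ (2 * R) ^ m * (2 * K * ε) := by gcongr
        _ = _ := by ring
    · refine le_of_eq_of_le ?_ zero_le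
      convert measure_empty (μ := (volume : Measure (Fin m → ℝ)))
      refine Set.eq_empty_of_forall_notMem ?_
      rintro x ⟨h1, h2⟩
      have h3 := abs_affine_le 0 c x
      have h4 : |c₀| ≤ |c₀ + ∑ j, c j * x j| + |∑ j, c j * x j| := by
        simpa using abs_sub_le (c₀ + ∑ j, c j * x j) 0 (∑ j, c j * x j)
      rw [zero_add, abs_zero, zero_add] at h3
      have h5 := mul_le_mul_of_nonneg_left (sum_abs_le_of_norm_le h1) (norm_nonneg c)
      rw [hK] at hc
      linarith [norm_nonneg c]
  · push Not at hc
    have hcpos : 0 < ‖c‖ := by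
      by_contra h
      nlinarith [abs_nonneg c₀, norm_nonneg c]
    have hρc : ρ ≤ K * ‖c‖ := by
      rcases le_max_iff.1 hle with h | h
      · exact h.trans hc.le
      · nlinarith
    obtain _ | k := m
    · simp [Subsingleton.elim c 0] at hcpos
    obtain ⟨i, hmax⟩ := Finite.exists_max fun i => ‖c i‖
    have hi : |c i| = ‖c‖ := le_antisymm (norm_le_pi_norm c i)
      ((pi_norm_le_iff_of_nonneg (norm_nonneg _)).2 hmax)
    refine (volume_slab_le_of_ne_zero (by linarith) c₀ c i (abs_pos.1 (hi ▸ hcpos)) ε).trans ?_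
    rw [hi, ← ENNReal.ofReal_mul (by positivity)]
    refine ENNReal.ofReal_le_ofReal ?_
    rw [div_mul_eq_mul_div, div_le_div_iff₀ hcpos hρ]
    have h2R : (2 * R) ^ k ≤ (2 * R) ^ (k + 1) := pow_le_pow_right₀ (by linarith) (by simp)
    calc 2 * ε * (2 * R) ^ k * ρ ≤ 2 * ε * (2 * R) ^ (k + 1) * (K * ‖c‖) := by gcongr
      _ = _ := by ring

theorem abs_affine_le_coeffHeight {m : ℕ} (α : Fin m → ℝ) (b : ℝ) (p : ℤ) (q : Fin (m + 1) → ℤ)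
    (x : Fin m → ℝ) : |∑ i, (q i : ℝ) * hyperplaneParam α b x i + p| ≤
      (1 + ∑ j, |x j|) * coeffHeight α b p q := by
  rw [sum_mul_hyperplaneParam]
  refine (abs_affine_le _ _ _).trans ?_
  have hx : 0 ≤ ∑ j, |x j| := Finset.sum_nonneg fun j _ => abs_nonneg _
  have h1 : |(p : ℝ) + b * q (Fin.last m)| ≤ coeffHeight α b p q := le_max_left _ _
  have h2 : ‖linCoeff α q‖ ≤ coeffHeight α b p q := le_max_right _ _
  nlinarith

/-- If the condition fails for `v`, every point of the hyperplane has exponent at least `v`. -/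
theorem infinite_solutions_of_not_PCond {m r : ℕ} (hrm : r ≤ m) (a : Fin r → ℝ) (b : ℝ) {v : ℝ}
    (hv : (m + 1 : ℝ) < v) (h : ¬ PCond m r hrm a b v) (x : Fin m → ℝ) :
    {q : Fin (m + 1) → ℤ | ∃ p : ℤ,
      |∑ i, (q i : ℝ) * hyperplaneParam (extendSlope a) b x i + (p : ℝ)| <
        prodTimes q ^ (-(v / ((m + 1 : ℕ) : ℝ)))}.Infinite := by
  refine infinite_solutions _ _ fun δ hδ => ?_
  unfold PCond at h
  push Not at h
  obtain ⟨d, hd, h⟩ := h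
  have hn : (0 : ℝ) < m + 1 := by positivity
  have hv0 : 0 < v := hn.trans hv
  have hd0 : 0 < d := lt_trans (div_pos (by linarith) (by positivity)) hd
  rw [div_lt_iff₀ (by positivity)] at hd
  set C : ℝ := 1 + ∑ j, |x j|
  have hC : 0 < C := add_pos_of_pos_of_nonneg one_pos (Finset.sum_nonneg fun j _ => abs_nonneg _)
  obtain ⟨η, hη⟩ : ∃ η, η = (1 + d) - (1 - (r + 1) * d) * (v / (m + 1)) := ⟨_, rfl⟩
  have hη0 : 0 < η := by
    have : η * (m + 1) = (1 + d) * (m + 1) - (1 - (r + 1) * d) * v := by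
      rw [hη]; field_simp
    refine pos_of_mul_pos_left ?_ hn.le
    rw [this]
    linarith
  obtain ⟨t, ht, hT, p, q, hcard, hlt⟩ := h (1 + |Real.log C / η| + |Real.log C - Real.log δ|)
    (by positivity)
  set τ := ∑ i, t i
  rw [RCnorm_eq_coeffHeight, max_lt_iff, Finset.fold_max_lt] at hlt
  obtain ⟨⟨-, hq⟩, hρ⟩ := hlt
  have hτ1 : 1 + Real.log C / η ≤ τ := by
    linarith [le_abs_self (Real.log C / η), abs_nonneg (Real.log C - Real.log δ)]
  have hτ2 : 1 + (Real.log C - Real.log δ) ≤ τ := by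
    linarith [abs_nonneg (Real.log C / η), le_abs_self (Real.log C - Real.log δ)]
  have hτ0 : 0 < τ := by
    linarith [abs_nonneg (Real.log C / η), abs_nonneg (Real.log C - Real.log δ)]
  have hval : |∑ i, (q i : ℝ) * hyperplaneParam (extendSlope a) b x i + (p : ℝ)| <
      Real.exp (Real.log C - (1 + d) * τ) := by
    refine (abs_affine_le_coeffHeight _ _ _ _ _).trans_lt ?_
    have : coeffHeight (extendSlope a) b p q < Real.exp (-(1 + d) * τ) := by
      rw [← mul_lt_mul_iff_right₀ (Real.exp_pos τ), ← Real.exp_add]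
      refine hρ.trans_eq (congrArg _ ?_)
      ring
    calc C * _ < C * Real.exp (-(1 + d) * τ) := by gcongr
      _ = _ := by rw [sub_eq_add_neg, Real.exp_add, Real.exp_log hC, neg_mul]
  refine ⟨q, p, ?_, ?_, ?_⟩
  · rintro rfl
    simp at hcard
  · refine hval.trans_le ?_
    rw [← Real.le_log_iff_exp_le hδ]
    nlinarith
  · have hprod : prodTimes q ≤ Real.exp ((1 - (r + 1) * d) * τ) := by
      rw [prodTimes_eq_prod_filter]
      calc ∏ i with q i ≠ 0, |(q i : ℝ)| ≤ ∏ i with q i ≠ 0, Real.exp (t i - d * τ) := by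
            refine Finset.prod_le_prod (fun i _ => abs_nonneg _) fun i _ => ?_
            have := (hq i (Finset.mem_univ i)).le
            rw [← mul_le_mul_iff_right₀ (Real.exp_pos (t i)), ← mul_assoc, ← Real.exp_add,
              ← Real.exp_add] at this
            simpa [sub_eq_add_neg] using this
        _ = Real.exp (∑ i with q i ≠ 0, t i - (r + 1) * d * τ) := by
            rw [← Real.exp_sum, Finset.sum_sub_distrib, Finset.sum_const, hcard]
            simp [mul_assoc]
        _ ≤ _ := by
            have : ∑ i with q i ≠ 0, t i ≤ τ :=
              Finset.sum_le_sum_of_subset_of_nonneg (Finset.filter_subset _ _) fun i _ _ => ht i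
            refine Real.exp_le_exp.2 ?_
            linarith
    refine hval.trans_le (le_trans ?_ (Real.rpow_le_rpow_of_nonpos
      (one_pos.trans_le (one_le_prodTimes q)) hprod (neg_nonpos.2 (by positivity))))
    rw [← Real.exp_mul]
    refine Real.exp_le_exp.2 ?_
    have h1 : Real.log C ≤ η * τ := by
      have := mul_le_mul_of_nonneg_left hτ1 hη0.le
      rw [mul_add, mul_div_cancel₀ _ hη0.ne'] at this
      linarith
    push_cast
    rw [hη] at h1
    linarith

/-- The condition for `v` bounds from below the height of the integer vectors with all nonzero
entries comparable to the last one. -/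
theorem PCond.exists_le_coeffHeight {m r : ℕ} {hrm : r ≤ m} {a : Fin r → ℝ} {b v v' : ℝ}
    (h : PCond m r hrm a b v) (hv : (m + 1 : ℝ) < v) (hvv' : v < v') {A : ℝ} (hA : 0 < A) :
    ∃ B > 0, ∀ (p : ℤ) (q : Fin (m + 1) → ℤ),
      (Finset.univ.filter fun i => q i ≠ 0).card = r + 1 → q (Fin.last m) ≠ 0 →
      (∀ i, |(q i : ℝ)| ≤ A * |(q (Fin.last m) : ℝ)|) →
      (B * |(q (Fin.last m) : ℝ)|) ^ (-((r + 1) * v' / (m + 1))) ≤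
        coeffHeight (extendSlope a) b p q := by
  have hn : (0 : ℝ) < m + 1 := by positivity
  have hv0 : 0 < v := hn.trans hv
  have hv0' : 0 < v' := hv0.trans hvv'
  have hD : 0 < (r + 1 : ℝ) * v' + (m + 1) := by positivity
  obtain ⟨d, hd⟩ : ∃ d, d = (v' - (m + 1)) / ((r + 1) * v' + (m + 1)) := ⟨_, rfl⟩
  obtain ⟨T, hT, h⟩ := h d (by
    rw [hd, div_lt_div_iff₀ (by positivity) hD]
    nlinarith [mul_pos (sub_pos.2 hvv') (mul_pos hn (by positivity : (0 : ℝ) < r + 2))])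
  refine ⟨max (2 * A) (Real.exp T), by positivity, fun p q hcard hlast hq => ?_⟩
  set B := max (2 * A) (Real.exp T)
  have hB : 0 < B := by positivity
  have hl1 : (1 : ℝ) ≤ |(q (Fin.last m) : ℝ)| := by exact_mod_cast Int.one_le_abs hlast
  obtain ⟨L, hL⟩ : ∃ L, L = Real.log (B * |(q (Fin.last m) : ℝ)|) := ⟨_, rfl⟩
  have hexpL : Real.exp L = B * |(q (Fin.last m) : ℝ)| := by
    rw [hL, Real.exp_log (by positivity)]
  have hTL : T ≤ L := by
    rw [← Real.exp_le_exp, hexpL]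
    exact (le_max_right _ _).trans (le_mul_of_one_le_right hB.le hl1)
  obtain ⟨τ, hτ⟩ : ∃ τ, τ = (r + 1) * L * ((r + 1) * v' + (m + 1)) / ((m + 1) * (r + 2)) :=
    ⟨_, rfl⟩
  have hLτ : L ≤ τ := by
    rw [hτ, le_div_iff₀ (by positivity)]
    have h1 : (m + 1 : ℝ) * (r + 2) ≤ (r + 1) * v' + (m + 1) := by nlinarith
    have h2 : (r + 1 : ℝ) * v' + (m + 1) ≤ (r + 1) * ((r + 1) * v' + (m + 1)) := by nlinarith
    nlinarith
  have hτL : τ / (r + 1) = L + d * τ := by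
    rw [hτ, hd]; field_simp; ring
  have hdτ : (1 + d) * τ = (r + 1) * v' / (m + 1) * L := by
    rw [hτ, hd]; field_simp; ring
  have hsum : ∑ i, (if q i ≠ 0 then τ / (r + 1) else 0) = τ := by
    rw [← Finset.sum_filter, Finset.sum_const, hcard, nsmul_eq_mul]
    push_cast
    field_simp
  have hτ0 : 0 < τ := by linarith
  have hP := h (fun i => if q i ≠ 0 then τ / (r + 1) else 0)
    (fun i => by split_ifs <;> positivity) (by rw [hsum]; linarith) p q hcard
  rw [hsum, RCnorm_eq_coeffHeight] at hP
  rcases le_max_iff.1 hP with hP | hP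
  · refine absurd hP (not_le.2 ((Finset.fold_max_lt _).2 ⟨Real.exp_pos _, fun i _ => ?_⟩))
    by_cases hi : q i = 0
    · simpa [hi] using Real.exp_pos _
    · rw [if_pos hi, hτL, neg_add, Real.exp_add, Real.exp_neg, hexpL, neg_mul, mul_right_comm]
      refine mul_lt_of_lt_one_left (Real.exp_pos _) ?_
      rw [inv_mul_lt_one₀ (by positivity)]
      refine (hq i).trans_lt ?_
      have : A < B := lt_of_lt_of_le (by linarith) (le_max_left _ _)
      gcongr
  · rw [← hexpL, ← Real.exp_mul]
    rw [← mul_le_mul_iff_right₀ (Real.exp_pos τ), ← Real.exp_add]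
    refine le_of_eq_of_le (congrArg _ ?_) hP
    linarith

theorem exists_small_linCoeff {m : ℕ} (α : Fin m → ℝ) : ∃ κ > 0, κ < 1 ∧
    ∀ q : Fin (m + 1) → ℤ, q ≠ 0 → ‖linCoeff α q‖ < κ →
      q (Fin.last m) ≠ 0 ∧ (∀ j, q j.castSucc ≠ 0 ↔ α j ≠ 0) ∧
      (∀ i, q i ≠ 0 → κ * |(q (Fin.last m) : ℝ)| ≤ |(q i : ℝ)|) ∧
      ∀ i, |(q i : ℝ)| ≤ (1 + ‖α‖) * |(q (Fin.last m) : ℝ)| := by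
  obtain ⟨κ, hκ, hκ0, hκ1⟩ : ∃ κ : ℝ, (∀ j, α j ≠ 0 → 2 * κ ≤ |α j|) ∧ 0 < κ ∧ κ < 1 := by
    have key : ∀ j, ∀ᶠ κ in nhdsWithin (0 : ℝ) (Ioi 0), α j ≠ 0 → 2 * κ ≤ |α j| := by
      intro j
      by_cases hj : α j = 0
      · simp [hj]
      · filter_upwards [Ioo_mem_nhdsGT (half_pos (abs_pos.2 hj))] with κ hκ _
        linarith [hκ.2]
    obtain ⟨κ, h1, h2⟩ := ((Filter.eventually_all.2 key).and (Ioo_mem_nhdsGT one_pos)).exists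
    exact ⟨κ, h1, h2.1, h2.2⟩
  refine ⟨κ, hκ0, hκ1, fun q hq hlin => ?_⟩
  have hj : ∀ j : Fin m, |(q j.castSucc : ℝ) + α j * q (Fin.last m)| < κ := fun j =>
    (norm_le_pi_norm (linCoeff α q) j).trans_lt hlin
  have hzero : ∀ k : ℤ, |(k : ℝ)| < κ → k = 0 := fun k hk =>
    Int.abs_lt_one_iff.1 (by exact_mod_cast hk.trans hκ1)
  have hlast : q (Fin.last m) ≠ 0 := by
    intro h0
    refine hq (funext fun i => ?_)
    induction i using Fin.lastCases with
    | last => exact h0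
    | cast j => exact hzero _ (by simpa [h0] using hj j)
  have hl1 : (1 : ℝ) ≤ |(q (Fin.last m) : ℝ)| := by exact_mod_cast Int.one_le_abs hlast
  have hlow : ∀ j : Fin m, α j ≠ 0 → κ * |(q (Fin.last m) : ℝ)| ≤ |(q j.castSucc : ℝ)| := by
    intro j hα
    have h1 := abs_sub_abs_le_abs_sub (α j * q (Fin.last m)) (-(q j.castSucc : ℝ))
    rw [abs_mul, abs_neg, sub_neg_eq_add, add_comm (α j * _)] at h1
    nlinarith [hj j, hκ j hα]
  have hiff : ∀ j : Fin m, q j.castSucc ≠ 0 ↔ α j ≠ 0 := by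
    refine fun j => ⟨fun h hα => h (hzero _ (by simpa [hα] using hj j)), fun hα h => ?_⟩
    have := hlow j hα
    rw [h, Int.cast_zero, abs_zero] at this
    nlinarith
  refine ⟨hlast, hiff, fun i hi => ?_, fun i => ?_⟩
  · induction i using Fin.lastCases with
    | last => exact mul_le_of_le_one_left (abs_nonneg _) hκ1.le
    | cast j => exact hlow j ((hiff j).1 hi)
  · induction i using Fin.lastCases with
    | last => nlinarith [norm_nonneg α]
    | cast j =>
      have h1 := abs_sub_abs_le_abs_sub (q j.castSucc : ℝ) (-(α j * q (Fin.last m)))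
      rw [abs_neg, abs_mul, sub_neg_eq_add] at h1
      have h2 : |α j| ≤ ‖α‖ := norm_le_pi_norm α j
      nlinarith [hj j]

theorem card_filter_ne_zero {m : ℕ} {α : Fin m → ℝ} {q : Fin (m + 1) → ℤ}
    (hlast : q (Fin.last m) ≠ 0) (hiff : ∀ j : Fin m, q j.castSucc ≠ 0 ↔ α j ≠ 0) :
    (Finset.univ.filter fun i => q i ≠ 0).card =
      (Finset.univ.filter fun j => α j ≠ 0).card + 1 := by
  rw [Finset.card_filter, Fin.sum_univ_castSucc, if_pos hlast, Finset.card_filter]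
  simp only [hiff]

/-- The points of a bounded box where `q · y(x) + p` is smaller than `ε`. -/
def slab {m : ℕ} (α : Fin m → ℝ) (b R ε : ℝ) (p : ℤ) (q : Fin (m + 1) → ℤ) : Set (Fin m → ℝ) :=
  {x | ‖x‖ ≤ R ∧ |∑ i, (q i : ℝ) * hyperplaneParam α b x i + (p : ℝ)| < ε}

theorem exists_volume_slab_le_coeffHeight {m : ℕ} (α : Fin m → ℝ) (b : ℝ) {R : ℝ} (hR : 1 ≤ R) :
    ∃ C > 0, ∀ (p : ℤ) (q : Fin (m + 1) → ℤ) (ε ρ : ℝ), 0 < ε → 0 < ρ → ρ ≤ coeffHeight α b p q →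
      volume (slab α b R ε p q) ≤ ENNReal.ofReal (C * ε / ρ) := by
  obtain ⟨C, hC, h⟩ := exists_volume_slab_le m hR
  refine ⟨C, hC, fun p q ε ρ hε hρ hle => ?_⟩
  have : slab α b R ε p q = {x | ‖x‖ ≤ R ∧ |((p : ℝ) + b * q (Fin.last m)) +
      ∑ j, linCoeff α q j * x j| < ε} := by
    simp only [slab, sum_mul_hyperplaneParam]
  rw [this]
  exact h _ _ ε ρ hε hρ hle

/-- The integers `p` with large coefficient height contribute `O(ε)` for each `q`. -/
theorem exists_tsum_volume_slab_le {m : ℕ} (α : Fin m → ℝ) (b : ℝ) {R κ : ℝ} (hR : 1 ≤ R)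
    (hκ : 0 < κ) : ∃ C > 0, ∀ (q : Fin (m + 1) → ℤ) (ε : ℝ), 0 < ε → ε ≤ 1 →
      ∑' p : ℤ, volume {x | κ ≤ coeffHeight α b p q ∧ x ∈ slab α b R ε p q} ≤
        ENNReal.ofReal (C * ε) := by
  obtain ⟨C, hC, h⟩ := exists_volume_slab_le_coeffHeight α b hR
  refine ⟨C * (3 / κ + 2 * (m * R)), by positivity, fun q ε hε hε1 => ?_⟩
  set N := ‖linCoeff α q‖
  have hN : 0 ≤ N := norm_nonneg _
  set z : ℝ := b * q (Fin.last m)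
  obtain ⟨K, hK⟩ : ∃ K, K = 1 + N * (m * R) := ⟨_, rfl⟩
  have hK0 : 0 < K := by rw [hK]; positivity
  have hM : 0 < max κ N := lt_max_of_lt_left hκ
  have hzero : ∀ p ∉ Finset.Icc ⌈-z - K⌉ ⌊-z + K⌋,
      volume {x | κ ≤ coeffHeight α b p q ∧ x ∈ slab α b R ε p q} = 0 := by
    intro p hp
    convert measure_empty (μ := (volume : Measure (Fin m → ℝ)))
    refine Set.eq_empty_of_forall_notMem ?_
    rintro x ⟨-, hx, hlt⟩
    refine hp (Finset.mem_Icc.2 ?_)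
    rw [sum_mul_hyperplaneParam] at hlt
    have h3 := abs_affine_le 0 (linCoeff α q) x
    have h4 : |(p : ℝ) + z| ≤ |p + z + ∑ j, linCoeff α q j * x j| +
        |∑ j, linCoeff α q j * x j| := by
      simpa using abs_sub_le (p + z + ∑ j, linCoeff α q j * x j) 0 (∑ j, linCoeff α q j * x j)
    rw [zero_add, abs_zero, zero_add] at h3
    have h5 := mul_le_mul_of_nonneg_left (sum_abs_le_of_norm_le hx) hN
    have h6 : |(p : ℝ) + z| ≤ K := by rw [hK]; linarith
    rw [abs_le] at h6
    exact ⟨Int.ceil_le.2 (by linarith), Int.le_floor.2 (by linarith)⟩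
  have hle : ∀ p ∈ Finset.Icc ⌈-z - K⌉ ⌊-z + K⌋,
      volume {x | κ ≤ coeffHeight α b p q ∧ x ∈ slab α b R ε p q} ≤
        ENNReal.ofReal (C * ε / max κ N) := by
    intro p _
    by_cases hp : κ ≤ coeffHeight α b p q
    · exact (measure_mono fun x hx => And.right hx).trans
        (h p q ε _ hε hM (max_le hp (le_max_right _ _)))
    · have : {x | κ ≤ coeffHeight α b p q ∧ x ∈ slab α b R ε p q} = ∅ :=
        Set.eq_empty_of_forall_notMem fun x hx => hp (And.left hx)
      simp [this]
  rw [tsum_eq_sum hzero]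
  refine (Finset.sum_le_card_nsmul _ _ _ hle).trans ?_
  rw [nsmul_eq_mul, ← ENNReal.ofReal_natCast, ← ENNReal.ofReal_mul (by positivity)]
  refine ENNReal.ofReal_le_ofReal ?_
  have hcard : ((Finset.Icc ⌈-z - K⌉ ⌊-z + K⌋).card : ℝ) ≤ 2 * K + 1 := by
    rw [Int.card_Icc]
    have h1 := Int.floor_le (-z + K)
    have h2 := Int.le_ceil (-z - K)
    have h3 : (((⌊-z + K⌋ + 1 - ⌈-z - K⌉).toNat : ℤ) : ℝ) ≤ 2 * K + 1 := by
      rw [Int.toNat_eq_max, Int.cast_max]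
      push_cast
      exact max_le (by linarith) (by linarith)
    exact_mod_cast h3
  rw [← mul_div_assoc, div_le_iff₀ hM]
  have h1 : 2 * K + 1 ≤ (3 / κ + 2 * (m * R)) * max κ N := by
    have h2 : 3 ≤ 3 / κ * max κ N := by
      rw [div_mul_eq_mul_div, le_div_iff₀ hκ]
      linarith [le_max_left κ N]
    have h3 : N * (m * R) ≤ max κ N * (m * R) :=
      mul_le_mul_of_nonneg_right (le_max_right _ _) (by positivity)
    rw [hK]
    linarith
  calc _ ≤ (2 * K + 1) * (C * ε) := by gcongr
    _ ≤ (3 / κ + 2 * (m * R)) * max κ N * (C * ε) := by gcongr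
    _ = _ := by ring

/-- Almost every point of a box lies in finitely many of the slabs with large coefficient height. -/
theorem ae_finite_large_height {m : ℕ} (α : Fin m → ℝ) (b : ℝ) {R κ γ : ℝ} (hR : 1 ≤ R)
    (hκ : 0 < κ) (hγ : 1 < γ) : ∀ᵐ x : Fin m → ℝ, {w : (Fin (m + 1) → ℤ) × ℤ |
      κ ≤ coeffHeight α b w.2 w.1 ∧ x ∈ slab α b R (prodTimes w.1 ^ (-γ)) w.2 w.1}.Finite := by
  obtain ⟨C, hC, h⟩ := exists_tsum_volume_slab_le α b hR hκ
  refine ae_finite_setOfPred_mem (s := fun w : (Fin (m + 1) → ℤ) × ℤ =>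
    {x | κ ≤ coeffHeight α b w.2 w.1 ∧ x ∈ slab α b R (prodTimes w.1 ^ (-γ)) w.2 w.1}) ?_
  rw [ENNReal.tsum_prod']
  refine ne_top_of_le_ne_top
    ((summable_prodTimes_rpow (m + 1) hγ).mul_left C).tsum_ofReal_ne_top
    (ENNReal.tsum_le_tsum fun q => h q _ ?_ ?_)
  · exact Real.rpow_pos_of_pos (one_pos.trans_le (one_le_prodTimes q)) _
  · exact Real.rpow_le_one_of_one_le_of_nonpos (one_le_prodTimes q) (by linarith)

theorem coeffHeight_sub_le {m : ℕ} (α : Fin m → ℝ) (b : ℝ) (p p' : ℤ) (q q' : Fin (m + 1) → ℤ) :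
    coeffHeight α b (p - p') (q - q') ≤ coeffHeight α b p q + coeffHeight α b p' q' := by
  have h1 : linCoeff α (q - q') = linCoeff α q - linCoeff α q' := by
    ext j; simp only [linCoeff, Pi.sub_apply]; push_cast; ring
  refine max_le ?_ ?_
  · refine le_trans ?_ (add_le_add (le_max_left _ _) (le_max_left _ _))
    have h2 : ((p - p' : ℤ) : ℝ) + b * ((q - q') (Fin.last m) : ℤ) =
        (p + b * q (Fin.last m)) - (p' + b * q' (Fin.last m)) := by
      rw [Pi.sub_apply]; push_cast; ring
    rw [h2]
    exact norm_sub_le (E := ℝ) _ _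
  · rw [h1]
    exact (norm_sub_le _ _).trans (add_le_add (le_max_right _ _) (le_max_right _ _))

theorem rpow_neg_inv_div_le {B x ρ β : ℝ} (hB : 0 < B) (hx : 0 < x) (hβ : 0 < β)
    (h : (B * x) ^ (-β) ≤ ρ) : ρ ^ (-β⁻¹) / B ≤ x := by
  have hBx : 0 < B * x := mul_pos hB hx
  have := Real.rpow_le_rpow_of_nonpos (Real.rpow_pos_of_pos hBx _) h
    (neg_nonpos.2 (inv_nonneg.2 hβ.le))
  rw [← Real.rpow_mul hBx.le, neg_mul_neg, mul_inv_cancel₀ hβ.ne', Real.rpow_one] at this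
  rwa [div_le_iff₀' hB]

/-- Almost every point of a box lies in finitely many of the slabs with small coefficient
height. -/
theorem ae_finite_small_height {m : ℕ} (α : Fin m → ℝ) (b : ℝ) {R κ B β γ δ : ℝ} {s : ℕ}
    (hR : 1 ≤ R) (hκ : 0 < κ) (hκ1 : κ < 1) (hB : 0 < B) (hβ : 0 < β) (hβγ : β < s * γ)
    (hγ : 1 < s * γ) (hγ0 : 0 < γ) (hδ : 0 < δ)
    (hheight : ∀ (p : ℤ) (q : Fin (m + 1) → ℤ), q ≠ 0 → coeffHeight α b p q < κ →
      q (Fin.last m) ≠ 0 ∧ (B * |(q (Fin.last m) : ℝ)|) ^ (-β) ≤ coeffHeight α b p q ∧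
      (δ * |(q (Fin.last m) : ℝ)|) ^ s ≤ prodTimes q) :
    ∀ᵐ x : Fin m → ℝ, {w : (Fin (m + 1) → ℤ) × ℤ | (w.1 ≠ 0 ∧ coeffHeight α b w.2 w.1 < κ / 2) ∧
      x ∈ slab α b R (prodTimes w.1 ^ (-γ)) w.2 w.1}.Finite := by
  obtain ⟨C, hC, hvol⟩ := exists_volume_slab_le_coeffHeight α b hR
  let W := {w : (Fin (m + 1) → ℤ) × ℤ // w.1 ≠ 0 ∧ coeffHeight α b w.2 w.1 < κ / 2}
  let ρ : W → ℝ := fun w => coeffHeight α b w.1.2 w.1.1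
  let g : W → ℤ := fun w => w.1.1 (Fin.last m)
  have hW : ∀ w : W, g w ≠ 0 ∧ (B * |(g w : ℝ)|) ^ (-β) ≤ ρ w ∧
      (δ * |(g w : ℝ)|) ^ s ≤ prodTimes w.1.1 := fun w =>
    hheight _ _ w.2.1 (w.2.2.trans (half_lt_self hκ))
  have hg1 : ∀ w, (1 : ℝ) ≤ |(g w : ℝ)| := fun w => by exact_mod_cast Int.one_le_abs (hW w).1
  have hg0 : ∀ w, (0 : ℝ) < |(g w : ℝ)| := fun w => one_pos.trans_le (hg1 w)
  have hρ0 : ∀ w, 0 < ρ w := fun w =>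
    (Real.rpow_pos_of_pos (mul_pos hB (hg0 w)) _).trans_le (hW w).2.1
  have hsep : ∀ w w' : W, w ≠ w' → (1 : ℝ) ≤ |(g w : ℝ) - g w'| ∧
      (B * |(g w : ℝ) - g w'|) ^ (-β) ≤ ρ w + ρ w' := by
    intro w w' hne
    have hsub := coeffHeight_sub_le α b w.1.2 w'.1.2 w.1.1 w'.1.1
    have hlt : ρ w + ρ w' < κ := by linarith [w.2.2, w'.2.2]
    have hq : w.1.1 - w'.1.1 ≠ 0 := by
      intro h0
      have hp : w.1.2 - w'.1.2 ≠ 0 := fun hp =>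
        hne (Subtype.ext (Prod.ext (sub_eq_zero.1 h0) (sub_eq_zero.1 hp)))
      have h1 : (1 : ℝ) ≤ |((w.1.2 - w'.1.2 : ℤ) : ℝ)| := by exact_mod_cast Int.one_le_abs hp
      rw [h0] at hsub
      have h2 : |((w.1.2 - w'.1.2 : ℤ) : ℝ)| ≤ coeffHeight α b (w.1.2 - w'.1.2) 0 :=
        le_trans (by simp) (le_max_left _ _)
      linarith
    have := hheight _ _ hq (hsub.trans_lt hlt)
    have hcast : (((w.1.1 - w'.1.1) (Fin.last m) : ℤ) : ℝ) = (g w : ℝ) - g w' := by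
      simp [g]
    rw [hcast] at this
    refine ⟨?_, this.2.1.trans hsub⟩
    rw [← hcast]
    exact_mod_cast Int.one_le_abs this.1
  let h₀ : W → ℝ := fun w => (2 * ρ w) ^ (-β⁻¹) / B
  have hsum := summable_of_separated g (fun w => max 1 (h₀ w)) hβ hβγ hγ
    (fun w => le_max_left _ _) (fun w => max_le (hg1 w) (rpow_neg_inv_div_le hB (hg0 w) hβ
      ((hW w).2.1.trans (by linarith [hρ0 w])))) (by
      intro w w' hne
      obtain ⟨h1, h2⟩ := hsep w w' hne
      have h3 : ∀ u : W, ρ w + ρ w' ≤ 2 * ρ u → max 1 (h₀ u) ≤ |(g w : ℝ) - g w'| := fun u hu =>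
        max_le h1 (rpow_neg_inv_div_le hB (one_pos.trans_le h1) hβ (h2.trans hu))
      rcases le_total (ρ w) (ρ w') with h | h
      · exact (min_le_right _ _).trans (h3 w' (by linarith))
      · exact (min_le_left _ _).trans (h3 w (by linarith)))
  have hfin : ∀ᵐ x : Fin m → ℝ,
      {w : W | x ∈ slab α b R (prodTimes w.1.1 ^ (-γ)) w.1.2 w.1.1}.Finite := by
    refine ae_finite_setOfPred_mem (ne_top_of_le_ne_top
      (hsum.mul_left (2 * C * B ^ β * δ ^ (-(s * γ)))).tsum_ofReal_ne_top
      (ENNReal.tsum_le_tsum fun w => (hvol _ _ _ _ (Real.rpow_pos_of_pos (one_pos.trans_le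
        (one_le_prodTimes _)) _) (hρ0 w) le_rfl).trans (ENNReal.ofReal_le_ofReal ?_)))
    have e1 : prodTimes w.1.1 ^ (-γ) ≤ δ ^ (-(s * γ)) * |(g w : ℝ)| ^ (-(s * γ)) := by
      refine (Real.rpow_le_rpow_of_nonpos (pow_pos (mul_pos hδ (hg0 w)) s) (hW w).2.2
        (by linarith)).trans_eq ?_
      rw [← Real.rpow_natCast, ← Real.rpow_mul (by positivity), mul_neg,
        Real.mul_rpow hδ.le (abs_nonneg _)]
    have e2 : (ρ w)⁻¹ ≤ 2 * B ^ β * max 1 (h₀ w) ^ β := by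
      have h0 : 0 < 2 * ρ w := by linarith [hρ0 w]
      have : h₀ w ^ β = (2 * ρ w)⁻¹ / B ^ β := by
        rw [Real.div_rpow (by positivity) hB.le, ← Real.rpow_mul h0.le, neg_mul,
          inv_mul_cancel₀ hβ.ne', Real.rpow_neg_one]
      calc (ρ w)⁻¹ = 2 * B ^ β * h₀ w ^ β := by
            rw [this, mul_inv]; field_simp
        _ ≤ _ := by
            have : 0 ≤ h₀ w := div_nonneg (Real.rpow_nonneg h0.le _) hB.le
            gcongr
            exact le_max_right _ _
    have e3 : 0 ≤ prodTimes w.1.1 ^ (-γ) :=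
      Real.rpow_nonneg (zero_le_one.trans (one_le_prodTimes _)) _
    have e4 : 0 ≤ (ρ w)⁻¹ := inv_nonneg.2 (hρ0 w).le
    calc C * prodTimes w.1.1 ^ (-γ) / ρ w = C * (prodTimes w.1.1 ^ (-γ) * (ρ w)⁻¹) := by ring
      _ ≤ C * ((δ ^ (-(s * γ)) * |(g w : ℝ)| ^ (-(s * γ))) * (2 * B ^ β * max 1 (h₀ w) ^ β)) := by
          gcongr
      _ = _ := by ring
  filter_upwards [hfin] with x hx
  refine (hx.image Subtype.val).subset ?_
  rintro w ⟨h1, h2⟩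
  exact ⟨⟨w, h1⟩, h2, rfl⟩

/-- Under the condition for some `v < u`, almost every point of the hyperplane has exponent at most
`u`. -/
theorem ae_finite_solutions_of_PCond {m r : ℕ} {hrm : r ≤ m} {a : Fin r → ℝ} (ha : ∀ i, a i ≠ 0)
    {b v u : ℝ} (h : PCond m r hrm a b v) (hv : (m + 1 : ℝ) < v) (hvu : v < u) :
    ∀ᵐ x : Fin m → ℝ, {q : Fin (m + 1) → ℤ | ∃ p : ℤ,
      |∑ i, (q i : ℝ) * hyperplaneParam (extendSlope a) b x i + (p : ℝ)| <
        prodTimes q ^ (-(u / (m + 1)))}.Finite := by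
  have hn : (0 : ℝ) < m + 1 := by positivity
  obtain ⟨v', hvv', hvu'⟩ := exists_between hvu
  obtain ⟨κ, hκ, hκ1, hsmall⟩ := exists_small_linCoeff (extendSlope (m := m) a)
  obtain ⟨B, hB, hlow⟩ := h.exists_le_coeffHeight hv hvv'
    (A := 1 + ‖extendSlope (m := m) a‖) (by positivity)
  have hu1 : 1 < u / (m + 1) := (one_lt_div hn).2 (by linarith)
  have hheight : ∀ (p : ℤ) (q : Fin (m + 1) → ℤ), q ≠ 0 →
      coeffHeight (extendSlope a) b p q < κ → q (Fin.last m) ≠ 0 ∧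
      (B * |(q (Fin.last m) : ℝ)|) ^ (-((r + 1) * v' / (m + 1))) ≤
        coeffHeight (extendSlope a) b p q ∧
      (κ * |(q (Fin.last m) : ℝ)|) ^ (r + 1) ≤ prodTimes q := by
    intro p q hq hlt
    obtain ⟨h1, h2, h3, h4⟩ := hsmall q hq ((le_max_right _ _).trans_lt hlt)
    have hcard : (Finset.univ.filter fun i => q i ≠ 0).card = r + 1 := by
      rw [card_filter_ne_zero h1 h2, card_extendSlope_ne_zero hrm ha]
    refine ⟨h1, hlow p q hcard h1 h4, ?_⟩
    rw [prodTimes_eq_prod_filter, ← hcard, ← Finset.prod_const]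
    exact Finset.prod_le_prod (fun _ _ => by positivity) fun i hi =>
      h3 i (Finset.mem_filter.1 hi).2
  have hbox : ∀ N : ℕ, ∀ᵐ x : Fin m → ℝ, ‖x‖ ≤ N + 1 → {q : Fin (m + 1) → ℤ | ∃ p : ℤ,
      |∑ i, (q i : ℝ) * hyperplaneParam (extendSlope a) b x i + (p : ℝ)| <
        prodTimes q ^ (-(u / (m + 1)))}.Finite := by
    intro N
    have hR : (1 : ℝ) ≤ N + 1 := by linarith [N.cast_nonneg (α := ℝ)]
    have hr : (0 : ℝ) ≤ r := r.cast_nonneg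
    have hs := ae_finite_small_height (extendSlope a) b (γ := u / (m + 1)) (s := r + 1) hR hκ hκ1 hB
      (div_pos (mul_pos (by positivity) (by linarith)) hn)
      (by
        push_cast
        rw [mul_div_assoc]
        gcongr)
      (by push_cast; nlinarith) (by linarith) hκ hheight
    filter_upwards [hs, ae_finite_large_height (extendSlope a) b hR (half_pos hκ) hu1]
      with x h1 h2 hx
    refine (((h1.union h2).image Prod.fst).union (Set.finite_singleton 0)).subset ?_
    rintro q ⟨p, hp⟩
    by_cases hq : q = 0
    · exact Or.inr hq
    · refine Or.inl ⟨(q, p), ?_, rfl⟩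
      rcases lt_or_ge (coeffHeight (extendSlope a) b p q) (κ / 2) with hlt | hge
      · exact Or.inl ⟨⟨hq, hlt⟩, hx, hp⟩
      · exact Or.inr ⟨hge, hx, hp⟩
  filter_upwards [ae_all_iff.2 hbox] with x hx
  obtain ⟨N, hN⟩ := exists_nat_ge ‖x‖
  exact hx N (by linarith)

theorem omegaT_le_of_finite {n : ℕ} {y : Fin n → ℝ} {u : ℝ}
    (h : {q : Fin n → ℤ | ∃ p : ℤ, |∑ i, (q i : ℝ) * y i + (p : ℝ)| <
      prodTimes q ^ (-(u / (n : ℝ)))}.Finite) : omegaT y ≤ u := by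
  refine sSup_le ?_
  rintro _ ⟨v, rfl, hinf⟩
  refine EReal.coe_le_coe_iff.2 (le_of_not_gt fun huv => hinf (h.subset ?_))
  rintro q ⟨p, hp⟩
  refine ⟨p, hp.trans_le (Real.rpow_le_rpow_of_exponent_le (one_le_prodTimes q) ?_)⟩
  gcongr

theorem measurableEmbedding_hyperplaneParam {m : ℕ} (α : Fin m → ℝ) (b : ℝ) :
    MeasurableEmbedding (hyperplaneParam α b) := by
  refine Continuous.measurableEmbedding ?_ fun x x' h => ?_
  · refine continuous_pi fun i => ?_
    induction i using Fin.lastCases with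
    | last => simp only [hyperplaneParam, Fin.snoc_last]; fun_prop
    | cast j => simp only [hyperplaneParam, Fin.snoc_castSucc]; fun_prop
  · have := congrArg Fin.init h
    simpa [hyperplaneParam] using this

theorem stmt17 (m r : ℕ) (hm : 1 ≤ m) (hrm : r ≤ m) (a : Fin r → ℝ)
    (ha : ∀ i, a i ≠ 0) (b : ℝ) :
    omegaTMeas (Measure.map
        (fun x : Fin m → ℝ => Fin.snoc x (∑ i, a i * x (Fin.castLE hrm i) + b)) volume)
      = max (((m + 1 : ℕ) : EReal))
          (sSup {w : EReal | ∃ v : ℝ, w = (v : EReal) ∧ (m + 1 : ℝ) < v ∧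
            ¬ PCond m r hrm a b v}) := by
  have hparam : (fun x : Fin m → ℝ => (Fin.snoc x (∑ i, a i * x (Fin.castLE hrm i) + b) :
      Fin (m + 1) → ℝ)) = hyperplaneParam (extendSlope a) b := by
    funext x
    rw [sum_mul_extendSlope hrm]
    rfl
  have hlower : ∀ w : EReal, (∀ x : Fin m → ℝ, w ≤ omegaT (hyperplaneParam (extendSlope a) b x)) →
      w ≤ omegaTMeas (Measure.map (hyperplaneParam (m := m) (extendSlope a) b) volume) := by
    refine fun w hw => EReal.ge_of_forall_gt_iff_ge.1 fun z hz => le_sSup ⟨z, rfl, ?_⟩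
    rw [(measurableEmbedding_hyperplaneParam _ _).map_apply]
    have : hyperplaneParam (m := m) (extendSlope a) b ⁻¹' {y | (z : EReal) < omegaT y} = univ :=
      Set.eq_univ_of_forall fun x => hz.trans_le (hw x)
    rw [this]
    exact Measure.measure_univ_pos.2 (NeZero.ne _)
  rw [hparam]
  apply le_antisymm
  · refine sSup_le ?_
    rintro _ ⟨u, rfl, hu⟩
    by_contra hlt
    push Not at hlt
    obtain ⟨v, hv, hvu⟩ := EReal.lt_iff_exists_real_btwn.1 hlt
    rw [max_lt_iff] at hv
    have hv1 : (m + 1 : ℝ) < v := by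
      have : (((m + 1 : ℕ) : ℝ) : EReal) < v := by simpa using hv.1
      exact_mod_cast this
    have hP : PCond m r hrm a b v := by
      by_contra hP
      exact hv.2.not_ge (le_sSup ⟨v, rfl, hv1, hP⟩)
    refine hu.ne' ?_
    rw [(measurableEmbedding_hyperplaneParam _ _).map_apply]
    have hae := ae_finite_solutions_of_PCond ha hP hv1 (EReal.coe_lt_coe_iff.1 hvu)
    refine measure_mono_null ?_ (ae_iff.1 hae)
    intro x hx hfin
    refine not_lt.2 (omegaT_le_of_finite ?_) hx
    simpa using hfin
  · refine max_le (hlower _ fun x => natCast_le_omegaT _) (sSup_le ?_)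
    rintro _ ⟨v, rfl, hv, hP⟩
    exact hlower _ fun x => le_sSup ⟨v, rfl, infinite_solutions_of_not_PCond hrm a b hv hP x⟩
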